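/- Let 0 ≤ b ≤ 1 and 0 ≤ c ≤ 1 with bc ≠ 1, and let N_{b,c} be the extremal qubit channel with Kraus operators K₀ = [[√((1+b)(1+c)/(2(1+bc))), 0],[0, √((1−b)(1+c)/(2(1−bc)))]] and K₁ = [[0, √((1+b)(1−c)/(2(1−bc)))],[√((1−b)(1−c)/(2(1+bc))), 0]]. Then the maximum entanglement fidelity O(N_{b,c}) = (1+c)(1−b²c)/(2(1−b²c²)). -/

import Mathlib

open Matrix
open scoped Kronecker ComplexOrder

/-- The maximally entangled unit vector `φ = (1/√d) Σ_a e_a ⊗ e_a`. -/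
noncomputable def maxEnt (n : Type*) [Fintype n] [DecidableEq n] : n × n → ℂ :=
  fun p => if p.1 = p.2 then ((1 / Real.sqrt (Fintype.card n) : ℝ) : ℂ) else 0

/-- The output `(id ⊗ N)(ρ) = Σ_i (I ⊗ K_i) ρ (I ⊗ K_i)†` of one half of `ρ`
through the channel with Kraus operators `K`. -/
noncomputable def chanOut {n : Type*} [Fintype n] [DecidableEq n] {ι : Type*} [Fintype ι]
    (K : ι → Matrix n n ℂ) (ρ : Matrix (n × n) (n × n) ℂ) : Matrix (n × n) (n × n) ℂ :=
  ∑ i, ((1 : Matrix n n ℂ) ⊗ₖ K i) * ρ * ((1 : Matrix n n ℂ) ⊗ₖ K i)ᴴ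

/-- The entanglement fidelity `⟨φ, ((id⊗N)(ρ)) φ⟩`. -/
noncomputable def fid {n : Type*} [Fintype n] [DecidableEq n] {ι : Type*} [Fintype ι]
    (K : ι → Matrix n n ℂ) (ρ : Matrix (n × n) (n × n) ℂ) : ℂ :=
  star (maxEnt n) ⬝ᵥ (chanOut K ρ *ᵥ maxEnt n)

/-- A density matrix: positive semidefinite with unit trace. -/
def IsDensity {m : Type*} [Fintype m] (ρ : Matrix m m ℂ) : Prop :=
  ρ.PosSemidef ∧ ρ.trace = 1

/-- The set of (real) entanglement fidelity values achievable with density-matrix inputs;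
its supremum is the maximum entanglement fidelity `O(N)`. -/
noncomputable def fidSet {n : Type*} [Fintype n] [DecidableEq n] {ι : Type*} [Fintype ι]
    (K : ι → Matrix n n ℂ) : Set ℝ :=
  {x : ℝ | ∃ ρ : Matrix (n × n) (n × n) ℂ, IsDensity ρ ∧ fid K ρ = (x : ℂ)}

/-!
Since `(I ⊗ K)† φ = vec (K†) / √d`, the fidelity of `ρ` is `(1/d) Σ_i ⟨vec K_i†, ρ vec K_i†⟩`.
If the `K_i` are orthogonal for the Hilbert–Schmidt inner product, these vectors are orthogonal too,
so `Σ_i |vec K_i†⟩⟨vec K_i†|` has no nonzero eigenvalues besides the numbers `tr (K_i K_i†)`, and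
the maximum is the largest of them over `d`, attained at the corresponding pure state.
The two Kraus operators of `N_{b,c}` are orthogonal. Their squared norms are `1 ± c t` with
`t = (1 - b²) / (1 - b² c²) ≥ 0`.
-/

section OrthogonalFamily

variable {R 𝕜 ι m : Type*} [CommSemiring R] [RCLike 𝕜] [Fintype ι] [Fintype m]

theorem trace_mul_vecMulVec (A : Matrix m m R) (x y : m → R) :
    (A * vecMulVec x y).trace = y ⬝ᵥ A *ᵥ x := by
  rw [mul_vecMulVec, trace_vecMulVec, dotProduct_comm]

theorem sum_vecMulVec_mul_self_of_biorthogonal {x y : ι → m → R}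
    (hxy : Pairwise fun i j => y i ⬝ᵥ x j = 0) :
    (∑ i, vecMulVec (x i) (y i)) * ∑ i, vecMulVec (x i) (y i) =
      ∑ i, (y i ⬝ᵥ x i) • vecMulVec (x i) (y i) := by
  simp only [Finset.sum_mul, Finset.mul_sum, vecMulVec_mul_vecMulVec]
  refine Finset.sum_congr rfl fun i _ => ?_
  rw [Finset.sum_eq_single i (fun j _ hj => by rw [hxy hj, zero_smul, vecMulVec_zero])
    (by simp), vecMulVec_smul]

theorem sum_star_dotProduct_mulVec_le_of_orthogonal {v : ι → m → 𝕜}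
    (horth : Pairwise fun i j => star (v i) ⬝ᵥ v j = 0) {M : 𝕜} (hM : 0 < M)
    (hv : ∀ i, star (v i) ⬝ᵥ v i ≤ M) {ρ : Matrix m m 𝕜} (hρ : ρ.PosSemidef) :
    ∑ i, star (v i) ⬝ᵥ ρ *ᵥ v i ≤ M * ρ.trace := by
  classical
  -- `0 ≤ tr ((M - P)† ρ (M - P))`, where `tr (ρ P²) ≤ M tr (ρ P)`, gives `M tr (ρ P) ≤ M² tr ρ`.
  set P : Matrix m m 𝕜 := ∑ i, vecMulVec (v i) (star (v i))
  set S : 𝕜 := ∑ i, star (v i) ⬝ᵥ ρ *ᵥ v i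
  have trace_P : (ρ * P).trace = S := by
    simp only [P, S, Finset.mul_sum, trace_sum, trace_mul_vecMulVec]
  have trace_P_mul_P : (ρ * (P * P)).trace ≤ M * S := by
    simp only [P, S, sum_vecMulVec_mul_self_of_biorthogonal horth, Finset.mul_sum, trace_sum,
      Matrix.mul_smul, trace_smul, trace_mul_vecMulVec, smul_eq_mul]
    gcongr with i
    · exact hρ.dotProduct_mulVec_nonneg (v i)
    · exact hv i
  have star_M : star M = M := RCLike.conj_eq_iff_im.2 (RCLike.pos_iff.1 hM).2
  have star_P : Pᴴ = P := (posSemidef_sum _ fun i _ => posSemidef_vecMulVec_self_star (v i)).1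
  have trace_conj : ((M • 1 - P)ᴴ * ρ * (M • 1 - P)).trace =
      M * (M * ρ.trace) - 2 * (M * S) + (ρ * (P * P)).trace := by
    rw [conjTranspose_sub, conjTranspose_smul, conjTranspose_one, star_M, star_P,
      trace_mul_cycle, trace_mul_comm, ← trace_P]
    simp only [mul_sub, sub_mul, Matrix.mul_smul, Matrix.smul_mul, mul_one, one_mul, trace_sub,
      trace_smul, smul_eq_mul]
    ring
  have trace_nonneg := (hρ.conjTranspose_mul_mul_same (M • 1 - P)).trace_nonneg
  rw [trace_conj] at trace_nonneg
  refine le_of_mul_le_mul_left ?_ hM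
  linear_combination trace_nonneg + trace_P_mul_P

end OrthogonalFamily

section MaximumFidelity

variable {n ι : Type*} [Fintype n] [DecidableEq n] [Fintype ι]

theorem isDensity_normalize_vecMulVec {m : Type*} [Fintype m] {v : m → ℂ} (hv : v ≠ 0) :
    IsDensity ((star v ⬝ᵥ v)⁻¹ • vecMulVec v (star v)) := by
  have norm_pos : 0 < star v ⬝ᵥ v := dotProduct_star_self_pos_iff.2 hv
  refine ⟨(posSemidef_vecMulVec_self_star v).smul (inv_pos.2 norm_pos).le, ?_⟩
  rw [trace_smul, trace_vecMulVec, dotProduct_comm v, smul_eq_mul, inv_mul_cancel₀ norm_pos.ne']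

theorem maxEnt_eq_smul_vec_one : maxEnt n = ((√(Fintype.card n))⁻¹ : ℂ) • vec 1 := by
  ext p
  simp [maxEnt, one_apply, eq_comm]

theorem fid_eq_sum_star_vec_dotProduct (K : ι → Matrix n n ℂ) (ρ : Matrix (n × n) (n × n) ℂ) :
    fid K ρ =
      (Fintype.card n : ℂ)⁻¹ * ∑ i, star (vec (K i)ᴴ) ⬝ᵥ ρ *ᵥ vec (K i)ᴴ := by
  have vec_adjoint (A : Matrix n n ℂ) : ((1 : Matrix n n ℂ) ⊗ₖ A)ᴴ *ᵥ vec 1 = vec Aᴴ := by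
    simp [conjTranspose_kronecker, kronecker_mulVec_vec]
  have inv_sqrt_sq : ((√(Fintype.card n))⁻¹ : ℂ) * (√(Fintype.card n) : ℂ)⁻¹ =
      (Fintype.card n : ℂ)⁻¹ := by
    rw [← mul_inv, ← Complex.ofReal_mul, Real.mul_self_sqrt (Nat.cast_nonneg _)]
    simp
  have expectation (A : Matrix n n ℂ) :
      star (vec 1) ⬝ᵥ (((1 : Matrix n n ℂ) ⊗ₖ A) * ρ * ((1 : Matrix n n ℂ) ⊗ₖ A)ᴴ) *ᵥ vec 1 =
        star (vec Aᴴ) ⬝ᵥ ρ *ᵥ vec Aᴴ := by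
    rw [← vec_adjoint, star_mulVec, conjTranspose_conjTranspose, ← dotProduct_mulVec,
      mulVec_mulVec, mulVec_mulVec, Matrix.mul_assoc]
  simp only [fid, chanOut, maxEnt_eq_smul_vec_one, star_smul, smul_dotProduct, mulVec_smul,
    dotProduct_smul, sum_mulVec, dotProduct_sum, expectation, smul_eq_mul, ← inv_sqrt_sq,
    ← Finset.mul_sum]
  simp [mul_assoc]

theorem isGreatest_fidSet_of_orthogonal {K : ι → Matrix n n ℂ}
    (horth : Pairwise fun i j => (K i * (K j)ᴴ).trace = 0) {M : ℝ} (hM : 0 < M)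
    (hK : ∀ i, (K i * (K i)ᴴ).trace ≤ M) {i₀ : ι} (hi₀ : (K i₀ * (K i₀)ᴴ).trace = M) :
    IsGreatest (fidSet K) (M / Fintype.card n) := by
  have inner_vec (i j : ι) : star (vec (K i)ᴴ) ⬝ᵥ vec (K j)ᴴ = (K i * (K j)ᴴ).trace := by
    rw [star_vec_dotProduct_vec, conjTranspose_conjTranspose]
  have M_pos : (0 : ℂ) < M := by exact_mod_cast hM
  constructor
  · set v := vec (K i₀)ᴴ
    have norm_v : star v ⬝ᵥ v = M := (inner_vec i₀ i₀).trans hi₀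
    have v_ne_zero : v ≠ 0 := dotProduct_star_self_pos_iff.1 (norm_v ▸ M_pos)
    refine ⟨_, isDensity_normalize_vecMulVec v_ne_zero, ?_⟩
    rw [fid_eq_sum_star_vec_dotProduct, Finset.sum_eq_single i₀]
    · change _ * (star v ⬝ᵥ _ *ᵥ v) = _
      simp only [smul_mulVec, vecMulVec_mulVec, op_smul_eq_smul, dotProduct_smul, norm_v,
        smul_eq_mul, Complex.ofReal_div, Complex.ofReal_natCast]
      rw [inv_mul_cancel_left₀ M_pos.ne', div_eq_inv_mul]
    · intro i _ hi
      simp [smul_mulVec, vecMulVec_mulVec, v, inner_vec, horth hi]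
    · simp
  · rintro x ⟨ρ, ⟨hρ, trace_ρ⟩, hx⟩
    have bound := sum_star_dotProduct_mulVec_le_of_orthogonal (v := fun i => vec (K i)ᴴ)
      (fun i j hij => (inner_vec i j).trans (horth hij)) M_pos
      (fun i => (inner_vec i i).trans_le (hK i)) hρ
    rw [trace_ρ, mul_one] at bound
    have : (x : ℂ) ≤ (M / Fintype.card n : ℝ) := by
      rw [← hx, fid_eq_sum_star_vec_dotProduct, Complex.ofReal_div, div_eq_inv_mul,
        Complex.ofReal_natCast]
      gcongr
    exact_mod_cast this

end MaximumFidelity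

section ExtremalQubitChannel

/-- The Kraus operators of the extremal qubit channel `N_{b,c}`, for arbitrary real `b`, `c`. They
describe a channel when `|b| ≤ 1`, `|c| ≤ 1` and `b ^ 2 * c ^ 2 ≠ 1`. -/
noncomputable def extremalKraus (b c : ℝ) : Fin 2 → Matrix (Fin 2) (Fin 2) ℂ :=
  ![!![(√((1 + b) * (1 + c) / (2 * (1 + b * c))) : ℂ), 0;
       0, (√((1 - b) * (1 + c) / (2 * (1 - b * c))) : ℂ)],
    !![0, (√((1 + b) * (1 - c) / (2 * (1 - b * c))) : ℂ);
       (√((1 - b) * (1 - c) / (2 * (1 + b * c))) : ℂ), 0]]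

/-- The squared Hilbert–Schmidt norm of the first Kraus operator of `N_{b,c}`; that of the second
is the value at `(b, -c)`. -/
noncomputable def extremalWeight (b c : ℝ) : ℝ :=
  (1 + c) * (1 - b ^ 2 * c) / (1 - b ^ 2 * c ^ 2)

variable {b c : ℝ}

theorem extremalKraus_orthogonal (b c : ℝ) :
    Pairwise fun i j => (extremalKraus b c i * (extremalKraus b c j)ᴴ).trace = 0 := by
  intro i j hij
  fin_cases i <;> fin_cases j <;> simp_all [extremalKraus, trace_fin_two, vecMul, dotProduct]

theorem abs_mul_lt_one (hbc : b ^ 2 * c ^ 2 < 1) : |b * c| < 1 := by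
  rwa [← sq_lt_one_iff_abs_lt_one, mul_pow]

theorem extremalWeight_eq_add (hbc : b ^ 2 * c ^ 2 < 1) :
    extremalWeight b c =
      (1 + b) * (1 + c) / (2 * (1 + b * c)) + (1 - b) * (1 + c) / (2 * (1 - b * c)) := by
  have ⟨neg_one_lt, lt_one⟩ := abs_lt.1 (abs_mul_lt_one hbc)
  have denom₀_ne : 2 * (1 + b * c) ≠ 0 := by linarith
  have denom₁_ne : 2 * (1 - b * c) ≠ 0 := by linarith
  rw [extremalWeight, div_add_div _ _ denom₀_ne denom₁_ne,
    div_eq_div_iff (by linarith) (mul_ne_zero denom₀_ne denom₁_ne)]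
  ring

theorem extremalWeight_eq_one_add (hbc : b ^ 2 * c ^ 2 < 1) :
    extremalWeight b c = 1 + c * ((1 - b ^ 2) / (1 - b ^ 2 * c ^ 2)) := by
  rw [extremalWeight, ← mul_div_assoc, one_add_div (sub_pos.2 hbc).ne']
  ring

theorem one_sub_sq_div_nonneg (hb : |b| ≤ 1) (hbc : b ^ 2 * c ^ 2 < 1) :
    0 ≤ (1 - b ^ 2) / (1 - b ^ 2 * c ^ 2) :=
  div_nonneg (sub_nonneg.2 ((sq_le_one_iff_abs_le_one b).2 hb)) (sub_pos.2 hbc).le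

theorem extremalWeight_le_abs (hb : |b| ≤ 1) (hbc : b ^ 2 * c ^ 2 < 1) :
    extremalWeight b c ≤ extremalWeight b |c| := by
  rw [extremalWeight_eq_one_add hbc, extremalWeight_eq_one_add (by rwa [sq_abs]), sq_abs]
  gcongr
  · exact one_sub_sq_div_nonneg hb hbc
  · exact le_abs_self c

theorem extremalWeight_abs_pos (hb : |b| ≤ 1) (hbc : b ^ 2 * c ^ 2 < 1) :
    0 < extremalWeight b |c| := by
  rw [extremalWeight_eq_one_add (by rwa [sq_abs]), sq_abs]
  have := one_sub_sq_div_nonneg hb hbc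
  positivity

theorem trace_extremalKraus_zero_mul_conjTranspose (hb : |b| ≤ 1) (hc : |c| ≤ 1)
    (hbc : b ^ 2 * c ^ 2 < 1) :
    (extremalKraus b c 0 * (extremalKraus b c 0)ᴴ).trace = extremalWeight b c := by
  have ⟨neg_one_le_b, b_le_one⟩ := abs_le.1 hb
  have one_add_c_nonneg : 0 ≤ 1 + c := neg_le_iff_add_nonneg'.1 (abs_le.1 hc).1
  have ⟨neg_one_lt, lt_one⟩ := abs_lt.1 (abs_mul_lt_one hbc)
  have entry₀_nonneg : 0 ≤ (1 + b) * (1 + c) / (2 * (1 + b * c)) :=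
    div_nonneg (mul_nonneg (by linarith) one_add_c_nonneg) (by linarith)
  have entry₁_nonneg : 0 ≤ (1 - b) * (1 + c) / (2 * (1 - b * c)) :=
    div_nonneg (mul_nonneg (by linarith) one_add_c_nonneg) (by linarith)
  rw [extremalWeight_eq_add hbc, Complex.ofReal_add, ← Real.mul_self_sqrt entry₀_nonneg,
    ← Real.mul_self_sqrt entry₁_nonneg]
  simp [extremalKraus, trace_fin_two, vecMul, dotProduct]

theorem trace_extremalKraus_one_mul_conjTranspose (hb : |b| ≤ 1) (hc : |c| ≤ 1)
    (hbc : b ^ 2 * c ^ 2 < 1) :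
    (extremalKraus b c 1 * (extremalKraus b c 1)ᴴ).trace = extremalWeight b (-c) := by
  rw [← trace_extremalKraus_zero_mul_conjTranspose hb (by rwa [abs_neg]) (by rwa [neg_sq])]
  simp [extremalKraus, trace_fin_two, vecMul, dotProduct, sub_eq_add_neg]

theorem exists_trace_extremalKraus_mul_conjTranspose_eq (hb : |b| ≤ 1) (hc : |c| ≤ 1)
    (hbc : b ^ 2 * c ^ 2 < 1) :
    ∃ i, (extremalKraus b c i * (extremalKraus b c i)ᴴ).trace = extremalWeight b |c| := by
  rcases abs_choice c with h | h <;> rw [h]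
  · exact ⟨0, trace_extremalKraus_zero_mul_conjTranspose hb hc hbc⟩
  · exact ⟨1, trace_extremalKraus_one_mul_conjTranspose hb hc hbc⟩

theorem trace_extremalKraus_mul_conjTranspose_le (hb : |b| ≤ 1) (hc : |c| ≤ 1)
    (hbc : b ^ 2 * c ^ 2 < 1) (i : Fin 2) :
    (extremalKraus b c i * (extremalKraus b c i)ᴴ).trace ≤ extremalWeight b |c| := by
  fin_cases i
  · refine (trace_extremalKraus_zero_mul_conjTranspose hb hc hbc).trans_le ?_
    exact_mod_cast extremalWeight_le_abs hb hbc
  · refine (trace_extremalKraus_one_mul_conjTranspose hb hc hbc).trans_le ?_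
    rw [← abs_neg c]
    exact_mod_cast extremalWeight_le_abs hb (by rwa [neg_sq])

end ExtremalQubitChannel

theorem stmt_8_general (b c : ℝ) (hb : |b| ≤ 1) (hc : |c| ≤ 1) (hbc : b ^ 2 * c ^ 2 ≠ 1) :
    IsGreatest (fidSet (extremalKraus b c))
      ((1 + |c|) * (1 - b ^ 2 * |c|) / (2 * (1 - b ^ 2 * c ^ 2))) := by
  have sq_mul_sq_lt_one : b ^ 2 * c ^ 2 < 1 :=
    (mul_le_one₀ ((sq_le_one_iff_abs_le_one b).2 hb) (sq_nonneg c)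
      ((sq_le_one_iff_abs_le_one c).2 hc)).lt_of_ne hbc
  obtain ⟨i₀, hi₀⟩ := exists_trace_extremalKraus_mul_conjTranspose_eq hb hc sq_mul_sq_lt_one
  have greatest := isGreatest_fidSet_of_orthogonal (extremalKraus_orthogonal b c)
    (extremalWeight_abs_pos hb sq_mul_sq_lt_one)
    (trace_extremalKraus_mul_conjTranspose_le hb hc sq_mul_sq_lt_one) hi₀
  rwa [extremalWeight, sq_abs, Fintype.card_fin, Nat.cast_ofNat, div_div, mul_comm _ (2 : ℝ)]
    at greatest

/-- For the extremal qubit channel `N_{b,c}` (with `0 ≤ b ≤ 1`,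
`0 ≤ c ≤ 1`, `bc ≠ 1`) given by the two Kraus operators below, the maximum entanglement
fidelity is `O(N_{b,c}) = (1+c)(1−b²c)/(2(1−b²c²))`. -/
theorem stmt_8 (b c : ℝ) (hb0 : 0 ≤ b) (hb1 : b ≤ 1) (hc0 : 0 ≤ c) (hc1 : c ≤ 1)
    (hbc : b * c ≠ 1)
    (K : Fin 2 → Matrix (Fin 2) (Fin 2) ℂ)
    (hK : K = ![!![(Real.sqrt ((1 + b) * (1 + c) / (2 * (1 + b * c))) : ℂ), 0;
                   0, (Real.sqrt ((1 - b) * (1 + c) / (2 * (1 - b * c))) : ℂ)],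
                !![0, (Real.sqrt ((1 + b) * (1 - c) / (2 * (1 - b * c))) : ℂ);
                   (Real.sqrt ((1 - b) * (1 - c) / (2 * (1 + b * c))) : ℂ), 0]]) :
    sSup (fidSet K) = (1 + c) * (1 - b ^ 2 * c) / (2 * (1 - b ^ 2 * c ^ 2)) := by
  have sq_mul_sq_ne_one : b ^ 2 * c ^ 2 ≠ 1 := by
    rwa [← mul_pow, Ne, pow_eq_one_iff_of_nonneg (mul_nonneg hb0 hc0) two_ne_zero]
  have greatest := stmt_8_general b c (abs_le.2 ⟨by linarith, hb1⟩) (abs_le.2 ⟨by linarith, hc1⟩)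
    sq_mul_sq_ne_one
  simpa only [hK, abs_of_nonneg hc0, extremalKraus] using greatest.csSup_eq
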